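/- Let D=(V,A) be a semicomplete digraph on n vertices, let k ∈ ℕ, and let t ∈ [n]. Then the number of t-valid triples (Y,Z,S) is at most 2^{8k+2}. -/

import Mathlib

open Set

/-- A (loopless) digraph given by its arc relation `A` is *semicomplete* if between
any two distinct vertices there is at least one arc. -/
def Semicomplete {V : Type*} (A : V → V → Prop) : Prop :=
  Irreflexive A ∧ ∀ x y : V, x ≠ y → A x y ∨ A y x

/-- Reachability (by a directed path) inside the subdigraph induced on the vertex set `W`. -/
def DReach {V : Type*} (A : V → V → Prop) (W : Set V) : V → V → Prop :=
  Relation.ReflTransGen fun a b => a ∈ W ∧ b ∈ W ∧ A a b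

/-- The vertex set of the strongly connected component of `v` in the
subdigraph induced on the vertex set `W`. -/
def dscc {V : Type*} (A : V → V → Prop) (W : Set V) (v : V) : Set V :=
  {u | u ∈ W ∧ DReach A W v u ∧ DReach A W u v}

/-- `C` is the vertex set of a strongly connected component of the subdigraph induced on `W`. -/
def IsSccSet {V : Type*} (A : V → V → Prop) (W : Set V) (C : Set V) : Prop :=
  ∃ v ∈ W, C = dscc A W v

/-- `mco`: the maximum number of vertices in a strongly connected component of the
subdigraph induced on `W`. -/
noncomputable def mco {V : Type*} (A : V → V → Prop) (W : Set V) : ℕ :=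
  sSup {n | ∃ v ∈ W, n = (dscc A W v).ncard}

/-- Out-degree of `v`. -/
noncomputable def outDeg {V : Type*} (A : V → V → Prop) (v : V) : ℕ := {u | A v u}.ncard

/-- In-degree of `v`. -/
noncomputable def inDeg {V : Type*} (A : V → V → Prop) (v : V) : ℕ := {u | A u v}.ncard

/-- `S` covers all arcs from `Z` to `Y`. -/
def ArcCover {V : Type*} (A : V → V → Prop) (Y Z S : Set V) : Prop :=
  ∀ y ∈ Y, ∀ z ∈ Z, A z y → y ∈ S ∨ z ∈ S

/-- A triple `(Y,Z,S)` is `t`-valid (with respect to the digraph `A` and parameter `k`). -/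
def TValid {V : Type*} [Fintype V] (A : V → V → Prop) (k t : ℕ) (Y Z S : Set V) : Prop :=
  Y ∪ Z = Set.univ ∧ Disjoint Y Z ∧ Y.ncard = t ∧
  ArcCover A Y Z S ∧ (∀ S' ⊆ S, ArcCover A Y Z S' → S' = S) ∧
  S.ncard ≤ k ∧
  (∀ x ∈ S, Fintype.card V - t + k < outDeg A x → x ∈ Y) ∧
  (∀ x ∈ S, t + k < inDeg A x → x ∈ Z)

/-- The weight `w((Y1,Z1,S1),(Y2,Z2,S2)) = |S1 \ S2| + max (0, |(Z1 ∩ Y2) \ (S1 ∪ S2)| - ℓ)`. -/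
noncomputable def wt {V : Type*} (ℓ : ℕ) (Z1 S1 Y2 S2 : Set V) : ℕ :=
  (S1 \ S2).ncard + (((Z1 ∩ Y2) \ (S1 ∪ S2)).ncard - ℓ)

/-- Compatibility of a pair of valid triples. -/
def Compat {V : Type*} (ℓ k : ℕ) (Y1 Z1 S1 Y2 Z2 S2 : Set V) : Prop :=
  Y1 ⊂ Y2 ∧ (∀ x ∈ S1 ∩ Z1, x ∈ Z2 → x ∈ S2) ∧ (Y1 \ S1 ⊆ Y2 \ S2) ∧
  wt ℓ Z1 S1 Y2 S2 ≤ k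

/-! If `S` covers all arcs from `Z` to `Y`, then every vertex of `Y \ S` dominates all of `Z \ S`, so
its out-degree inside `Y \ S` is at most its total out-degree minus `|Z \ S|`. Since a semicomplete
digraph has at most `2m + 1` vertices of out-degree at most `m`, few vertices of `Y \ S` have
out-degree at most `|Z| + k`; dually, few vertices of `Z \ S` have in-degree at most `|Y| + k`. Hence
a single `t`-valid triple forces all but `7k + 2` vertices to have a large out-degree or a large
in-degree, and the degree conditions in the definition of validity fix on which side these vertices
lie in *every* `t`-valid triple. This leaves `2 ^ (7k + 2)` choices for `Y`, and for each of them a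
bounded search tree gives at most `2 ^ k` minimal covers `S` of size at most `k`. -/

section Counting

variable {α β : Type*}

theorem ncard_le_mul_ncard_image {s : Set α} (hs : s.Finite) (f : α → β) (n : ℕ)
    (hn : ∀ b ∈ f '' s, {a ∈ s | f a = b}.ncard ≤ n) : s.ncard ≤ n * (f '' s).ncard := by
  classical
  lift s to Finset α using hs
  rw [← Finset.coe_image, ncard_coe_finset, ncard_coe_finset]
  refine Finset.card_le_mul_card_image s n fun b hb => ?_
  rw [← ncard_coe_finset, Finset.coe_filter]
  exact hn b (by simpa using hb)

theorem encard_sdiff_insert_add_one {s t : Set α} {a : α} (has : a ∈ s) (hat : a ∉ t) :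
    (s \ insert a t).encard + 1 = (s \ t).encard := by
  rw [← encard_sdiff_singleton_add_one (mem_sdiff_of_mem has hat), sdiff_sdiff, union_singleton]

theorem card_le_two_mul_add_one_of_card_filter_le {r : α → α → Prop} [DecidableRel r]
    {s : Finset α} {m : ℕ} (hr : (s : Set α).Pairwise fun x y => r x y ∨ r y x)
    (hm : ∀ x ∈ s, (s.filter (r x)).card ≤ m) : s.card ≤ 2 * m + 1 := by
  classical
  have hsplit : ∀ x ∈ s,
      s.card ≤ (s.filter (r x)).card + (s.filter fun y => r y x).card + 1 := fun x hx =>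
    calc s.card ≤ (insert x (s.filter (r x) ∪ s.filter fun y => r y x)).card := by
          refine Finset.card_le_card fun y hy => ?_
          rcases eq_or_ne x y with rfl | hxy
          · exact Finset.mem_insert_self _ _
          · simpa [hy, hxy.symm] using hr hx hy hxy
      _ ≤ (s.filter (r x) ∪ s.filter fun y => r y x).card + 1 := Finset.card_insert_le _ _
      _ ≤ _ := Nat.add_le_add_right (Finset.card_union_le _ _) 1
  have hswap : ∑ x ∈ s, (s.filter (r x)).card = ∑ x ∈ s, (s.filter fun y => r y x).card :=
    Finset.sum_card_bipartiteAbove_eq_sum_card_bipartiteBelow r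
  have hsq : s.card * s.card ≤ s.card * (2 * m + 1) :=
    calc s.card * s.card = ∑ _x ∈ s, s.card := by rw [Finset.sum_const, smul_eq_mul]
      _ ≤ ∑ x ∈ s, ((s.filter (r x)).card + (s.filter fun y => r y x).card + 1) :=
          Finset.sum_le_sum hsplit
      _ = ∑ x ∈ s, (2 * (s.filter (r x)).card + 1) := by
          simp only [Finset.sum_add_distrib, ← hswap, two_mul]
      _ ≤ ∑ _x ∈ s, (2 * m + 1) := Finset.sum_le_sum fun x hx => by have := hm x hx; omega
      _ = s.card * (2 * m + 1) := by rw [Finset.sum_const, smul_eq_mul]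
  rcases s.card.eq_zero_or_pos with h | h
  · omega
  · exact Nat.le_of_mul_le_mul_left hsq h

end Counting

section Digraph

variable {V : Type*} {A : V → V → Prop} {Y Z S : Set V}

/-- The vertices of out-degree at most `a` and in-degree at most `b`: those whose side in a valid
triple is not forced by their degrees. -/
def lowDegree (A : V → V → Prop) (a b : ℕ) : Set V :=
  {x | outDeg A x ≤ a ∧ inDeg A x ≤ b}

theorem ncard_le_of_forall_arc [Finite V] {W X : Set V} {m : ℕ}
    (hA : W.Pairwise fun x y => A x y ∨ A y x) (hWX : Disjoint W X)
    (hdom : ∀ w ∈ W, ∀ x ∈ X, A w x) (hdeg : ∀ w ∈ W, outDeg A w ≤ X.ncard + m) :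
    W.ncard ≤ 2 * m + 1 := by
  classical
  lift W to Finset V using W.toFinite
  rw [ncard_coe_finset]
  refine card_le_two_mul_add_one_of_card_filter_le hA fun w hw => ?_
  have hdisj : Disjoint (W.filter (A w) : Set V) X :=
    hWX.mono_left (Finset.coe_subset.2 (Finset.filter_subset _ _))
  have hsub : (W.filter (A w) : Set V) ∪ X ⊆ {u | A w u} :=
    union_subset (fun u hu => (Finset.mem_filter.1 hu).2) (hdom w hw)
  have hcard : (W.filter (A w)).card + X.ncard ≤ outDeg A w := by
    rw [← ncard_coe_finset, ← ncard_union_eq hdisj]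
    exact ncard_le_ncard hsub
  have := hdeg w hw
  omega

namespace ArcCover

theorem flip (h : ArcCover A Y Z S) : ArcCover (flip A) Z Y S :=
  fun z hz y hy hzy => (h y hy z hz hzy).symm

theorem outDeg_le [Finite V] (h : ArcCover A Y Z S) (hYZ : Codisjoint Y Z) {z : V}
    (hz : z ∈ Z \ S) : outDeg A z ≤ Z.ncard + S.ncard := by
  have hunion : Y ∪ Z = univ := codisjoint_iff.1 hYZ
  refine (ncard_le_ncard fun u hu => ?_).trans (ncard_union_le Z S)
  rcases eq_univ_iff_forall.1 hunion u with huY | huZ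
  · exact Or.inr ((h u huY z hz.1 hu).resolve_right hz.2)
  · exact Or.inl huZ

theorem inDeg_le [Finite V] (h : ArcCover A Y Z S) (hYZ : Codisjoint Y Z) {y : V}
    (hy : y ∈ Y \ S) : inDeg A y ≤ Y.ncard + S.ncard :=
  h.flip.outDeg_le hYZ.symm hy

theorem ncard_setOf_outDeg_le [Finite V] (hA : Pairwise fun x y => A x y ∨ A y x)
    (h : ArcCover A Y Z S) (hYZ : Disjoint Y Z) (m : ℕ) :
    {y ∈ Y \ S | outDeg A y ≤ Z.ncard + m}.ncard ≤ 2 * ((Z ∩ S).ncard + m) + 1 := by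
  refine ncard_le_of_forall_arc (X := Z \ S) (hA.set_pairwise _)
    (hYZ.mono (fun y hy => hy.1.1) sdiff_subset) (fun y hy z hz => ?_) fun y hy => ?_
  · refine (hA (hYZ.ne_of_mem hy.1.1 hz.1)).resolve_right fun hzy => ?_
    exact (h y hy.1.1 z hz.1 hzy).elim hy.1.2 hz.2
  · have hZ := ncard_inter_add_ncard_sdiff_eq_ncard Z S
    have hdeg : outDeg A y ≤ Z.ncard + m := hy.2
    omega

theorem ncard_setOf_inDeg_le [Finite V] (hA : Pairwise fun x y => A x y ∨ A y x)
    (h : ArcCover A Y Z S) (hYZ : Disjoint Y Z) (m : ℕ) :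
    {z ∈ Z \ S | inDeg A z ≤ Y.ncard + m}.ncard ≤ 2 * ((Y ∩ S).ncard + m) + 1 :=
  h.flip.ncard_setOf_outDeg_le (fun _ _ hxy => hA hxy.symm) hYZ.symm m

theorem ncard_lowDegree_le [Finite V] (hA : Pairwise fun x y => A x y ∨ A y x)
    (h : ArcCover A Y Z S) (hYZ : IsCompl Y Z) (m : ℕ) :
    (lowDegree A (Z.ncard + m) (Y.ncard + m)).ncard ≤ 3 * S.ncard + 4 * m + 2 := by
  set P := {y ∈ Y \ S | outDeg A y ≤ Z.ncard + m}
  set Q := {z ∈ Z \ S | inDeg A z ≤ Y.ncard + m}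
  have hunion : Y ∪ Z = univ := hYZ.sup_eq_top
  have hcover : lowDegree A (Z.ncard + m) (Y.ncard + m) ⊆ S ∪ (P ∪ Q) := by
    intro x hx
    by_cases hxS : x ∈ S
    · exact Or.inl hxS
    · rcases eq_univ_iff_forall.1 hunion x with hxY | hxZ
      · exact Or.inr (Or.inl ⟨⟨hxY, hxS⟩, hx.1⟩)
      · exact Or.inr (Or.inr ⟨⟨hxZ, hxS⟩, hx.2⟩)
  have hS : (Y ∩ S).ncard + (Z ∩ S).ncard = S.ncard := by
    rw [← ncard_union_eq (hYZ.disjoint.mono inter_subset_left inter_subset_left),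
      ← union_inter_distrib_right, hunion, univ_inter]
  have hP : P.ncard ≤ 2 * ((Z ∩ S).ncard + m) + 1 := h.ncard_setOf_outDeg_le hA hYZ.disjoint m
  have hQ : Q.ncard ≤ 2 * ((Y ∩ S).ncard + m) + 1 := h.ncard_setOf_inDeg_le hA hYZ.disjoint m
  calc (lowDegree A (Z.ncard + m) (Y.ncard + m)).ncard
      ≤ (S ∪ (P ∪ Q)).ncard := ncard_le_ncard hcover
    _ ≤ S.ncard + (P.ncard + Q.ncard) :=
        (ncard_union_le _ _).trans (Nat.add_le_add_left (ncard_union_le _ _) _)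
    _ ≤ 3 * S.ncard + 4 * m + 2 := by omega

end ArcCover

theorem encard_minimal_arcCover_superset_le (A : V → V → Prop) (Y Z X : Set V) (j : ℕ) :
    {S | Minimal (ArcCover A Y Z) S ∧ X ⊆ S ∧ (S \ X).encard ≤ j}.encard ≤ 2 ^ j := by
  induction j generalizing X with
  | zero =>
    refine (encard_le_encard (t := {X}) ?_).trans (by simp)
    rintro S ⟨-, hXS, hS⟩
    have hSX : S \ X = ∅ := by simpa using hS
    exact (sdiff_eq_empty.1 hSX).antisymm hXS
  | succ j ih =>
    by_cases hX : ArcCover A Y Z X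
    · refine (encard_le_encard (t := {X}) ?_).trans (by simpa using one_le_pow₀ one_le_two)
      rintro S ⟨hS, hXS, -⟩
      exact hS.eq_of_superset hX hXS
    · -- Branch on an arc that `X` leaves uncovered: every cover contains one of its two ends.
      obtain ⟨y, hy, z, hz, hzy, hyX, hzX⟩ :
          ∃ y ∈ Y, ∃ z ∈ Z, A z y ∧ y ∉ X ∧ z ∉ X := by
        simpa only [ArcCover, not_forall, not_or, exists_prop] using hX
      have hinsert : ∀ {S x}, x ∈ S → x ∉ X → (S \ X).encard ≤ (j + 1 : ℕ) →
          (S \ insert x X).encard ≤ j := by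
        intro S x hxS hxX hS
        rw [← encard_sdiff_insert_add_one hxS hxX, Nat.cast_add_one] at hS
        exact (ENat.add_le_add_iff_right ENat.one_ne_top).1 hS
      have hbranch : {S | Minimal (ArcCover A Y Z) S ∧ X ⊆ S ∧ (S \ X).encard ≤ (j + 1 : ℕ)} ⊆
          {S | Minimal (ArcCover A Y Z) S ∧ insert y X ⊆ S ∧ (S \ insert y X).encard ≤ j} ∪
          {S | Minimal (ArcCover A Y Z) S ∧ insert z X ⊆ S ∧ (S \ insert z X).encard ≤ j} := by
        rintro S ⟨hmin, hXS, hS⟩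
        rcases hmin.prop y hy z hz hzy with hyS | hzS
        · exact Or.inl ⟨hmin, insert_subset hyS hXS, hinsert hyS hyX hS⟩
        · exact Or.inr ⟨hmin, insert_subset hzS hXS, hinsert hzS hzX hS⟩
      calc _ ≤ _ := encard_le_encard hbranch
        _ ≤ _ := encard_union_le _ _
        _ ≤ 2 ^ j + 2 ^ j := add_le_add (ih _) (ih _)
        _ = 2 ^ (j + 1) := by rw [pow_succ, mul_two]

theorem encard_minimal_arcCover_le (A : V → V → Prop) (Y Z : Set V) (k : ℕ) :
    {S | Minimal (ArcCover A Y Z) S ∧ S.encard ≤ k}.encard ≤ 2 ^ k := by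
  simpa using encard_minimal_arcCover_superset_le A Y Z ∅ k

end Digraph

namespace TValid

variable {V : Type*} [Fintype V] {A : V → V → Prop} {k t : ℕ} {Y Z S : Set V}

theorem isCompl (h : TValid A k t Y Z S) : IsCompl Y Z :=
  ⟨h.2.1, codisjoint_iff.2 h.1⟩

theorem ncard_left (h : TValid A k t Y Z S) : Y.ncard = t := h.2.2.1

theorem ncard_right (h : TValid A k t Y Z S) : Z.ncard = Fintype.card V - t := by
  rw [← h.isCompl.compl_eq, ncard_compl, Nat.card_eq_fintype_card, h.ncard_left]

theorem arcCover (h : TValid A k t Y Z S) : ArcCover A Y Z S := h.2.2.2.1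

theorem minimal_arcCover (h : TValid A k t Y Z S) : Minimal (ArcCover A Y Z) S :=
  minimal_subset_iff.2 ⟨h.arcCover, fun S' hcov hS' => (h.2.2.2.2.1 S' hS' hcov).symm⟩

theorem ncard_cover_le (h : TValid A k t Y Z S) : S.ncard ≤ k := h.2.2.2.2.2.1

theorem mem_left_of_lt_outDeg (h : TValid A k t Y Z S) {x : V}
    (hx : Fintype.card V - t + k < outDeg A x) : x ∈ Y := by
  by_contra hxY
  have hxZ : x ∈ Z := h.isCompl.compl_eq ▸ hxY
  have hxS : x ∉ S := fun hxS => hxY (h.2.2.2.2.2.2.1 x hxS hx)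
  have hdeg := h.arcCover.outDeg_le h.isCompl.codisjoint ⟨hxZ, hxS⟩
  rw [h.ncard_right] at hdeg
  have := h.ncard_cover_le
  omega

theorem mem_right_of_lt_inDeg (h : TValid A k t Y Z S) {x : V} (hx : t + k < inDeg A x) :
    x ∈ Z := by
  by_contra hxZ
  have hxY : x ∈ Y := h.isCompl.symm.compl_eq ▸ hxZ
  have hxS : x ∉ S := fun hxS => hxZ (h.2.2.2.2.2.2.2 x hxS hx)
  have hdeg := h.arcCover.inDeg_le h.isCompl.codisjoint ⟨hxY, hxS⟩
  rw [h.ncard_left] at hdeg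
  have := h.ncard_cover_le
  omega

theorem left_eq_inter_lowDegree_union (h : TValid A k t Y Z S) :
    Y = Y ∩ lowDegree A (Fintype.card V - t + k) (t + k) ∪
      {x | Fintype.card V - t + k < outDeg A x} := by
  refine Subset.antisymm (fun x hxY => ?_)
    (union_subset inter_subset_left fun x => h.mem_left_of_lt_outDeg)
  by_cases hout : Fintype.card V - t + k < outDeg A x
  · exact Or.inr hout
  · have hin : ¬t + k < inDeg A x := fun hin =>
      disjoint_left.1 h.isCompl.disjoint hxY (h.mem_right_of_lt_inDeg hin)
    exact Or.inl ⟨hxY, not_lt.1 hout, not_lt.1 hin⟩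

theorem ncard_lowDegree_le (hA : Pairwise fun x y => A x y ∨ A y x) (h : TValid A k t Y Z S) :
    (lowDegree A (Fintype.card V - t + k) (t + k)).ncard ≤ 7 * k + 2 := by
  have hlow := h.arcCover.ncard_lowDegree_le hA h.isCompl k
  rw [h.ncard_left, h.ncard_right] at hlow
  have := h.ncard_cover_le
  omega

end TValid

section ValidTriples

variable {V : Type*} [Fintype V] {A : V → V → Prop}

/-- The set of `t`-valid triples `(Y, Z, S)` of the digraph `A`, with parameter `k`. -/
def validTriples (A : V → V → Prop) (k t : ℕ) : Set (Set V × Set V × Set V) :=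
  {T | TValid A k t T.1 T.2.1 T.2.2}

theorem ncard_validTriples_fiber_le (A : V → V → Prop) (k t : ℕ) (Y : Set V) :
    {T ∈ validTriples A k t | T.1 = Y}.ncard ≤ 2 ^ k := by
  have hcovers : {S | Minimal (ArcCover A Y Yᶜ) S ∧ S.encard ≤ k}.ncard ≤ 2 ^ k :=
    (encard_le_coe_iff_finite_ncard_le.1 (by exact_mod_cast encard_minimal_arcCover_le A Y Yᶜ k)).2
  have hright : ∀ T ∈ {T ∈ validTriples A k t | T.1 = Y}, T.2.1 = Yᶜ := by
    rintro T ⟨hT, rfl⟩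
    exact (TValid.isCompl hT).compl_eq.symm
  refine (ncard_le_ncard_of_injOn (fun T => T.2.2) ?_ ?_).trans hcovers
  · rintro ⟨_, Z, S⟩ ⟨hT : TValid A k t _ Z S, rfl⟩
    exact ⟨hT.isCompl.compl_eq ▸ hT.minimal_arcCover,
      encard_le_coe_iff_finite_ncard_le.2 ⟨S.toFinite, hT.ncard_cover_le⟩⟩
  · exact fun T hT T' hT' hS => Prod.ext (hT.2.trans hT'.2.symm)
      (Prod.ext ((hright T hT).trans (hright T' hT').symm) hS)

theorem ncard_fst_image_validTriples_le (hA : Pairwise fun x y => A x y ∨ A y x) (k t : ℕ) :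
    (Prod.fst '' validTriples A k t).ncard ≤ 2 ^ (7 * k + 2) := by
  rcases (validTriples A k t).eq_empty_or_nonempty with hempty | ⟨T₀, hT₀⟩
  · simp [hempty]
  set U := lowDegree A (Fintype.card V - t + k) (t + k)
  have hU : U.ncard ≤ 7 * k + 2 := TValid.ncard_lowDegree_le hA hT₀
  have hinj : InjOn (· ∩ U) (Prod.fst '' validTriples A k t) := by
    rintro _ ⟨T, hT, rfl⟩ _ ⟨T', hT', rfl⟩ (hTT' : T.1 ∩ U = T'.1 ∩ U)
    rw [TValid.left_eq_inter_lowDegree_union hT, hTT', ← TValid.left_eq_inter_lowDegree_union hT']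
  calc (Prod.fst '' validTriples A k t).ncard
      ≤ (𝒫 U).ncard := ncard_le_ncard_of_injOn (· ∩ U) (fun _ _ => inter_subset_right) hinj
    _ = 2 ^ U.ncard := ncard_powerset U
    _ ≤ 2 ^ (7 * k + 2) := Nat.pow_le_pow_right two_pos hU

end ValidTriples

theorem statement_7_general {V : Type*} [Fintype V] {A : V → V → Prop}
    (hA : Pairwise fun x y => A x y ∨ A y x) (k t : ℕ) :
    (validTriples A k t).ncard ≤ 2 ^ (8 * k + 2) :=
  calc (validTriples A k t).ncard
      ≤ 2 ^ k * (Prod.fst '' validTriples A k t).ncard :=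
        ncard_le_mul_ncard_image (toFinite _) Prod.fst _ fun Y _ =>
          ncard_validTriples_fiber_le A k t Y
    _ ≤ 2 ^ k * 2 ^ (7 * k + 2) := Nat.mul_le_mul_left _ (ncard_fst_image_validTriples_le hA k t)
    _ = 2 ^ (8 * k + 2) := by rw [← pow_add]; congr 1; ring

/-- for `1 ≤ t ≤ n`, there are at most `2 ^ (8k + 2)` `t`-valid triples. -/
theorem statement_7 {V : Type*} [Fintype V] (A : V → V → Prop) (hA : Semicomplete A)
    (k t : ℕ) (ht1 : 1 ≤ t) (ht2 : t ≤ Fintype.card V) :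
    {T : Set V × Set V × Set V | TValid A k t T.1 T.2.1 T.2.2}.ncard ≤ 2 ^ (8 * k + 2) :=
  statement_7_general (fun x y => hA.2 x y) k t
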